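/- Polynomial approximation in sup-norm controlled by the m-th order smoothness seminorm: for every integer m ≥ 2 there exists a constant C depending only on m such that for every m-times continuously differentiable function g : [0,1]² → ℝ there is a polynomial p(u,v) of degree at most m − 1 in each variable with sup_{(u,v) ∈ [0,1]²} |g(u,v) − p(u,v)| ≤ C Ω̃(g). Moreover the decomposition g = p + g̃ satisfies Ω̃(g̃) = Ω̃(g). -/

import Mathlib

noncomputable section

namespace Census

/-- Mixed partial derivative `∂^{a+b} g / ∂u^a ∂v^b`. -/
def pd (a b : ℕ) (g : ℝ → ℝ → ℝ) (u v : ℝ) : ℝ :=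
  iteratedDeriv a (fun t => iteratedDeriv b (g t) v) u

/-- `m`-th order smoothness penalty of a bivariate function:
`Ω(g) = Σ_{a+b=m} ‖∂^m g/∂u^a ∂v^b‖²_{L²([0,1]²)}`. -/
def Omega2M (m : ℕ) (g : ℝ → ℝ → ℝ) : ℝ :=
  ∑ a ∈ Finset.range (m + 1),
    ∫ q in (Set.Icc (0:ℝ) 1) ×ˢ (Set.Icc (0:ℝ) 1), (pd a (m - a) g q.1 q.2) ^ 2

/-- `Ω̃(g) = Ω(g)^{1/2}`. -/
def OmegaTilde2M (m : ℕ) (g : ℝ → ℝ → ℝ) : ℝ := Real.sqrt (Omega2M m g)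

end Census

/-! Averaging over `y ∈ K` the Taylor polynomial of `f` at `y` gives a polynomial whose distance to
`f x` is an integral over `t ∈ [0, 1]` of averages of `n`-th derivatives at the points
`y + t • (x - y)`. For fixed `t` these points fill a copy of `K` shrunk by the factor `1 - t`, so
Jensen's inequality bounds the average by the `L^p` mean of the derivative at the cost of a factor
`(1 - t) ^ (-(d / p))`. Against the weight `(1 - t) ^ (n - 1)` of the remainder this is integrable
as soon as `d / p < n`, which on the square with `p = 2` is the hypothesis `2 ≤ n`. Symmetry of the
derivatives reduces the full `n`-th derivative to the partials `∂_u^a ∂_v^b`, and the averaged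
polynomial has total degree less than `n`, hence does not contribute to the seminorm. -/

namespace Census

open MeasureTheory Module Set
open scoped Finset Nat Pointwise

section Averages

theorem norm_setAverage_le_of_norm_le {α F : Type*} [MeasurableSpace α] {μ : Measure α}
    [NormedAddCommGroup F] [NormedSpace ℝ F] {K : Set α} (hK : MeasurableSet K) {f : α → F}
    {g : α → ℝ} (hg : IntegrableOn g K μ) (h : ∀ y ∈ K, ‖f y‖ ≤ g y) :
    ‖⨍ y in K, f y ∂μ‖ ≤ ⨍ y in K, g y ∂μ := by
  rw [setAverage_eq, setAverage_eq, norm_smul, smul_eq_mul, Real.norm_of_nonneg (by positivity)]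
  gcongr
  exact norm_integral_le_of_norm_le hg (ae_restrict_of_forall_mem hK h)

theorem setAverage_le_rpow_setAverage_rpow {α : Type*} [MeasurableSpace α] {μ : Measure α}
    {K : Set α} {ρ : α → ℝ} {p : ℝ} (hp : 1 ≤ p) (hK₀ : μ K ≠ 0) (hK : μ K ≠ ⊤)
    (hρ₀ : 0 ≤ ρ) (hρ : IntegrableOn ρ K μ) (hρp : IntegrableOn (fun y ↦ ρ y ^ p) K μ) :
    ⨍ y in K, ρ y ∂μ ≤ (⨍ y in K, ρ y ^ p ∂μ) ^ p⁻¹ := by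
  have hp₀ : 0 < p := zero_lt_one.trans_le hp
  have jensen : (⨍ y in K, ρ y ∂μ) ^ p ≤ ⨍ y in K, ρ y ^ p ∂μ :=
    (convexOn_rpow hp).map_set_average_le
      (fun y _ ↦ (Real.continuousAt_rpow_const y p (.inr hp₀.le)).continuousWithinAt)
      isClosed_Ici hK₀ hK (ae_of_all _ hρ₀) hρ hρp
  exact (Real.le_rpow_inv_iff_of_pos (integral_nonneg hρ₀)
    (integral_nonneg fun y ↦ Real.rpow_nonneg (hρ₀ y) p) hp₀).2 jensen

variable {E : Type*} [NormedAddCommGroup E] [NormedSpace ℝ E] [FiniteDimensional ℝ E]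
  [MeasurableSpace E] [BorelSpace E] {μ : Measure E} [μ.IsAddHaarMeasure] {K : Set E}
  {x : E} {t : ℝ}

-- `y ↦ y + t • (x - y)` is a homothety of ratio `1 - t` mapping the convex set `K` into itself.
theorem setAverage_comp_add_smul_sub_le (hK : Convex ℝ K) (hx : x ∈ K)
    (ht₀ : 0 ≤ t) (ht₁ : t < 1) {ρ : E → ℝ} (hρ₀ : 0 ≤ ρ) (hρ : IntegrableOn ρ K μ) :
    ⨍ y in K, ρ (y + t • (x - y)) ∂μ ≤ ((1 - t) ^ finrank ℝ E)⁻¹ * ⨍ y in K, ρ y ∂μ := by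
  have ht : 0 < 1 - t := sub_pos.2 ht₁
  have image_subset : (fun z ↦ t • x + z) '' ((1 - t) • K) ⊆ K := by
    rintro _ ⟨_, ⟨y, hy, rfl⟩, rfl⟩
    exact hK hx hy ht₀ ht.le (by ring)
  have change_of_variables : ∫ y in K, ρ (y + t • (x - y)) ∂μ =
      ((1 - t) ^ finrank ℝ E)⁻¹ * ∫ z in (fun z ↦ t • x + z) '' ((1 - t) • K), ρ z ∂μ := by
    rw [(measurePreserving_add_left μ (t • x)).setIntegral_image_emb
        (measurableEmbedding_addLeft _),
      ← smul_eq_mul, ← Measure.setIntegral_comp_smul_of_pos μ (fun z ↦ ρ (t • x + z)) K ht]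
    congr! 3
    module
  rw [setAverage_eq, setAverage_eq, change_of_variables, smul_eq_mul, smul_eq_mul, mul_left_comm]
  gcongr _ * (_ * ?_)
  exact setIntegral_mono_set hρ (ae_of_all _ hρ₀) image_subset.eventuallyLE

theorem setAverage_comp_add_smul_sub_le_rpow (hKc : IsCompact K) (hK : Convex ℝ K)
    (hμK : μ K ≠ 0) (hx : x ∈ K) (ht₀ : 0 ≤ t) (ht₁ : t < 1) {p : ℝ} (hp : 1 ≤ p)
    {ρ : E → ℝ} (hρ₀ : 0 ≤ ρ) (hρ : Continuous ρ) :
    ⨍ y in K, ρ (y + t • (x - y)) ∂μ ≤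
      (1 - t) ^ (-(finrank ℝ E / p)) * (⨍ y in K, ρ y ^ p ∂μ) ^ p⁻¹ := by
  have ht : 0 < 1 - t := sub_pos.2 ht₁
  have hp₀ : 0 < p := zero_lt_one.trans_le hp
  have hρp : Continuous fun y ↦ ρ y ^ p := hρ.rpow_const fun _ ↦ .inr hp₀.le
  have average_nonneg : 0 ≤ ⨍ y in K, ρ y ^ p ∂μ :=
    integral_nonneg fun y ↦ Real.rpow_nonneg (hρ₀ y) p
  have integrable {ψ : E → ℝ} (hψ : Continuous ψ) : IntegrableOn ψ K μ :=
    hψ.continuousOn.integrableOn_compact hKc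
  calc ⨍ y in K, ρ (y + t • (x - y)) ∂μ
      ≤ (⨍ y in K, ρ (y + t • (x - y)) ^ p ∂μ) ^ p⁻¹ :=
        setAverage_le_rpow_setAverage_rpow hp hμK hKc.measure_ne_top (fun y ↦ hρ₀ (y + t • (x - y)))
          (integrable (by fun_prop)) (integrable (hρp.comp (by fun_prop)))
    _ ≤ (((1 - t) ^ finrank ℝ E)⁻¹ * ⨍ y in K, ρ y ^ p ∂μ) ^ p⁻¹ := by
        gcongr
        · exact integral_nonneg fun y ↦ Real.rpow_nonneg (hρ₀ _) p
        · exact setAverage_comp_add_smul_sub_le hK hx ht₀ ht₁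
            (fun y ↦ Real.rpow_nonneg (hρ₀ y) p) (integrable hρp)
    _ = (1 - t) ^ (-(finrank ℝ E / p)) * (⨍ y in K, ρ y ^ p ∂μ) ^ p⁻¹ := by
        rw [Real.mul_rpow (by positivity) average_nonneg,
          ← Real.rpow_natCast, ← Real.rpow_neg ht.le, ← Real.rpow_mul ht.le, div_eq_mul_inv,
          neg_mul]

end Averages

section AveragedTaylor

open scoped Nat

variable {E F : Type*} [NormedAddCommGroup E] [NormedSpace ℝ E]
  [NormedAddCommGroup F] [NormedSpace ℝ F]

/-- The Taylor polynomial at `y`, of degree less than `n`, of a function on a normed space,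
evaluated at `x`. -/
def taylorPolynomial (n : ℕ) (f : E → F) (y x : E) : F :=
  ∑ k ∈ Finset.range n, (k ! : ℝ)⁻¹ • iteratedFDeriv ℝ k f y fun _ ↦ x - y

/-- The Taylor polynomial of degree less than `n` averaged over the base points in `K`: a
polynomial approximation of `f` whose error only involves `n`-th derivatives on `K`. -/
def averagedTaylor [MeasurableSpace E] (μ : Measure E) (K : Set E) (n : ℕ)
    (f : E → F) (x : E) : F :=
  ⨍ y in K, taylorPolynomial n f y x ∂μ

variable {f : E → F} {n : ℕ}

theorem continuous_iteratedFDeriv_apply (hf : ContDiff ℝ n f) {k : ℕ} (hk : k ≤ n)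
    {X : Type*} [TopologicalSpace X] {y : X → E} {v : X → Fin k → E}
    (hy : Continuous y) (hv : Continuous v) :
    Continuous fun z ↦ iteratedFDeriv ℝ k f (y z) (v z) :=
  ((hf.continuous_iteratedFDeriv (mod_cast hk)).comp hy).eval hv

theorem sub_taylorPolynomial_eq_integral [CompleteSpace F] (hf : ContDiff ℝ (n + 1) f) (x y : E) :
    f x - taylorPolynomial (n + 1) f y x = ∫ t in (0 : ℝ)..1,
      ((1 - t) ^ n / n !) • iteratedFDeriv ℝ (n + 1) f (y + t • (x - y)) fun _ ↦ x - y := by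
  have taylor := map_add_eq_sum_add_integral_iteratedFDeriv (x := y) (y := x - y)
    fun _ _ ↦ hf.contDiffAt
  rw [add_sub_cancel] at taylor
  rw [sub_eq_iff_eq_add', taylorPolynomial, taylor, ← intervalIntegral.integral_smul]
  simp only [smul_smul, div_eq_inv_mul]

variable [MeasurableSpace E] [BorelSpace E] {μ : Measure E} {K : Set E} {x : E}

theorem sub_averagedTaylor_eq_integral [CompleteSpace F] [SFinite μ] [IsFiniteMeasureOnCompacts μ]
    (hf : ContDiff ℝ (n + 1) f) (hK : IsCompact K) (hμK : μ K ≠ 0) (x : E) :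
    f x - averagedTaylor μ K (n + 1) f x = ∫ t in (0 : ℝ)..1, ⨍ y in K,
      ((1 - t) ^ n / n !) • iteratedFDeriv ℝ (n + 1) f (y + t • (x - y)) (fun _ ↦ x - y) ∂μ := by
  have taylor_integrable : IntegrableOn (fun y ↦ taylorPolynomial (n + 1) f y x) K μ := by
    refine ContinuousOn.integrableOn_compact hK (Continuous.continuousOn ?_)
    refine continuous_finsetSum _ fun k hk ↦ ?_
    exact (continuous_iteratedFDeriv_apply (n := n + 1) hf (Finset.mem_range.1 hk).le
      continuous_id (by fun_prop)).const_smul _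
  have const_integrable : IntegrableOn (fun _ ↦ f x) K μ := integrableOn_const hK.measure_ne_top
  have remainder_continuous : Continuous fun z : ℝ × E ↦ ((1 - z.1) ^ n / (n ! : ℝ)) •
      iteratedFDeriv ℝ (n + 1) f (z.2 + z.1 • (x - z.2)) fun _ ↦ x - z.2 :=
    Continuous.smul (by fun_prop)
      (continuous_iteratedFDeriv_apply (n := n + 1) hf le_rfl (by fun_prop) (by fun_prop))
  have hμK' : μ.real K ≠ 0 := measureReal_ne_zero_iff hK.measure_ne_top |>.2 hμK
  calc f x - averagedTaylor μ K (n + 1) f x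
      = (μ.real K)⁻¹ • ∫ y in K, (f x - taylorPolynomial (n + 1) f y x) ∂μ := by
        rw [integral_sub const_integrable taylor_integrable,
          setIntegral_const, smul_sub, inv_smul_smul₀ hμK', averagedTaylor, setAverage_eq]
    _ = _ := by
        simp_rw [sub_taylorPolynomial_eq_integral hf, setAverage_eq,
          intervalIntegral.integral_smul]
        rw [intervalIntegral_integral_swap]
        rw [Measure.prod_restrict, uIoc_of_le zero_le_one]
        exact (remainder_continuous.continuousOn.integrableOn_compact
          (isCompact_Icc.prod hK)).mono_set (prod_mono_left Ioc_subset_Icc_self)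

variable [FiniteDimensional ℝ E] [μ.IsAddHaarMeasure]

theorem norm_setAverage_remainder_le (hf : ContDiff ℝ (n + 1) f) (hKc : IsCompact K)
    (hK : Convex ℝ K) (hμK : μ K ≠ 0) (hx : x ∈ K) {p : ℝ} (hp : 1 ≤ p) {t : ℝ}
    (ht₀ : 0 ≤ t) (ht₁ : t < 1) :
    ‖⨍ y in K, ((1 - t) ^ n / (n ! : ℝ)) •
        iteratedFDeriv ℝ (n + 1) f (y + t • (x - y)) (fun _ ↦ x - y) ∂μ‖ ≤
      Metric.diam K ^ (n + 1) / n ! *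
        (⨍ y in K, ‖iteratedFDeriv ℝ (n + 1) f y‖ ^ p ∂μ) ^ p⁻¹ *
        (1 - t) ^ (n - finrank ℝ E / p) := by
  have ht : 0 < 1 - t := sub_pos.2 ht₁
  have hDf : Continuous fun y ↦ ‖iteratedFDeriv ℝ (n + 1) f y‖ :=
    (hf.continuous_iteratedFDeriv le_rfl).norm
  have pointwise : ∀ y ∈ K, ‖((1 - t) ^ n / (n ! : ℝ)) •
      iteratedFDeriv ℝ (n + 1) f (y + t • (x - y)) (fun _ ↦ x - y)‖ ≤
        (1 - t) ^ n / n ! * Metric.diam K ^ (n + 1) *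
          ‖iteratedFDeriv ℝ (n + 1) f (y + t • (x - y))‖ := by
    intro y hy
    have hxy : ‖x - y‖ ≤ Metric.diam K := by
      rw [← dist_eq_norm]
      exact Metric.dist_le_diam_of_mem hKc.isBounded hx hy
    rw [norm_smul, Real.norm_of_nonneg (by positivity), mul_assoc, mul_comm (Metric.diam K ^ _)]
    gcongr
    exact ContinuousMultilinearMap.le_opNorm_mul_pow_of_le _ ((pi_norm_const_le _).trans hxy)
  have segment_continuous : Continuous fun y ↦ ‖iteratedFDeriv ℝ (n + 1) f (y + t • (x - y))‖ :=
    hDf.comp (by fun_prop)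
  calc _ ≤ ⨍ y in K, (1 - t) ^ n / n ! * Metric.diam K ^ (n + 1) *
          ‖iteratedFDeriv ℝ (n + 1) f (y + t • (x - y))‖ ∂μ :=
        norm_setAverage_le_of_norm_le hKc.measurableSet
          ((segment_continuous.const_mul _).continuousOn.integrableOn_compact hKc) pointwise
    _ = (1 - t) ^ n / n ! * Metric.diam K ^ (n + 1) *
          ⨍ y in K, ‖iteratedFDeriv ℝ (n + 1) f (y + t • (x - y))‖ ∂μ := integral_const_mul _ _
    _ ≤ (1 - t) ^ n / n ! * Metric.diam K ^ (n + 1) * ((1 - t) ^ (-(finrank ℝ E / p)) *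
          (⨍ y in K, ‖iteratedFDeriv ℝ (n + 1) f y‖ ^ p ∂μ) ^ p⁻¹) := by
        gcongr
        exact setAverage_comp_add_smul_sub_le_rpow hKc hK hμK hx ht₀ ht₁ hp
          (fun _ ↦ norm_nonneg _) hDf
    _ = _ := by
        rw [sub_eq_add_neg (n : ℝ), Real.rpow_add ht, Real.rpow_natCast]
        ring

theorem norm_sub_averagedTaylor_le [CompleteSpace F] (hf : ContDiff ℝ (n + 1) f)
    (hKc : IsCompact K) (hK : Convex ℝ K) (hμK : μ K ≠ 0) (hx : x ∈ K) {p : ℝ} (hp : 1 ≤ p)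
    (hn : finrank ℝ E / p < n + 1) :
    ‖f x - averagedTaylor μ K (n + 1) f x‖ ≤
      Metric.diam K ^ (n + 1) / (n ! * (n + 1 - finrank ℝ E / p)) *
        (⨍ y in K, ‖iteratedFDeriv ℝ (n + 1) f y‖ ^ p ∂μ) ^ p⁻¹ := by
  set A := Metric.diam K ^ (n + 1) / n ! *
    (⨍ y in K, ‖iteratedFDeriv ℝ (n + 1) f y‖ ^ p ∂μ) ^ p⁻¹ with hA
  have exponent : -1 < n - finrank ℝ E / p := by linarith
  have integrable :
      IntervalIntegrable (fun t : ℝ ↦ (1 - t) ^ (n - finrank ℝ E / p)) volume 0 1 := by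
    simpa using ((intervalIntegral.intervalIntegrable_rpow' exponent).comp_sub_left 1
      : IntervalIntegrable _ volume (1 - 1) (1 - 0))
  rw [sub_averagedTaylor_eq_integral hf hKc hμK]
  calc _ ≤ ∫ t in (0 : ℝ)..1, A * (1 - t) ^ (n - finrank ℝ E / p) := by
        refine intervalIntegral.norm_integral_le_of_norm_le zero_le_one ?_ (integrable.const_mul A)
        filter_upwards [Measure.ae_ne volume 1] with t ht₁ ht
        exact norm_setAverage_remainder_le hf hKc hK hμK hx hp ht.1.le (ht.2.lt_of_ne ht₁)
    _ = A * (n + 1 - finrank ℝ E / p)⁻¹ := by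
        rw [intervalIntegral.integral_const_mul,
          intervalIntegral.integral_comp_sub_left (fun s : ℝ ↦ s ^ (n - finrank ℝ E / p)),
          integral_rpow (.inl exponent), sub_self, sub_zero, Real.one_rpow,
          Real.zero_rpow (by linarith), sub_zero, one_div]
        ring
    _ = _ := by
        rw [hA, div_mul_eq_div_div]
        ring

end AveragedTaylor

section DirectionalDerivatives

variable {E F : Type*} [NormedAddCommGroup E] [NormedSpace ℝ E]
  [NormedAddCommGroup F] [NormedSpace ℝ F] {f : E → F}

/-- The iterated derivative of `f` along the directions in the list `l`, the last direction being
differentiated first. Unlike `iteratedFDeriv` it handles concatenated lists of directions well. -/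
def dirDeriv (l : List E) (f : E → F) : E → F :=
  l.foldr (fun v g q ↦ fderiv ℝ g q v) f

theorem dirDeriv_cons (v : E) (l : List E) (f : E → F) :
    dirDeriv (v :: l) f = fun q ↦ fderiv ℝ (dirDeriv l f) q v :=
  rfl

theorem dirDeriv_append (l₁ l₂ : List E) (f : E → F) :
    dirDeriv (l₁ ++ l₂) f = dirDeriv l₁ (dirDeriv l₂ f) :=
  List.foldr_append

theorem contDiff_dirDeriv {n : ℕ} {l : List E} (hf : ContDiff ℝ (n + l.length : ℕ) f) :
    ContDiff ℝ n (dirDeriv l f) := by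
  induction l generalizing n with
  | nil => exact hf
  | cons v l ih =>
    refine ((ih (n := n + 1) ?_).fderiv_right (m := n) (mod_cast le_rfl)).clm_apply contDiff_const
    rwa [add_assoc, add_comm 1]

theorem fderiv_fderiv_apply_comm (hf : ContDiff ℝ 2 f) (v w : E) :
    (fun q ↦ fderiv ℝ (fun q ↦ fderiv ℝ f q w) q v) =
      fun q ↦ fderiv ℝ (fun q ↦ fderiv ℝ f q v) q w := by
  have hdf : Differentiable ℝ (fderiv ℝ f) :=
    (hf.fderiv_right (m := 1) (by norm_num)).differentiable one_ne_zero
  have second_derivative (a b : E) (q : E) :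
      fderiv ℝ (fun q ↦ fderiv ℝ f q b) q a = fderiv ℝ (fderiv ℝ f) q a b := by
    simp [fderiv_clm_apply hdf.differentiableAt (differentiableAt_const b)]
  funext q
  rw [second_derivative, second_derivative]
  exact (hf.contDiffAt.isSymmSndFDerivAt (by simp)) v w

theorem dirDeriv_eq_of_perm {l₁ l₂ : List E} (h : l₁.Perm l₂) (hf : ContDiff ℝ l₁.length f) :
    dirDeriv l₁ f = dirDeriv l₂ f := by
  induction h with
  | nil => rfl
  | cons v _ ih => rw [dirDeriv_cons, dirDeriv_cons, ih (hf.of_le (by simp))]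
  | swap v w l =>
    refine fderiv_fderiv_apply_comm (contDiff_dirDeriv (n := 2) ?_) w v
    rwa [add_comm]
  | trans h₁ _ ih₁ ih₂ => rw [ih₁ hf, ih₂ (h₁.length_eq ▸ hf)]

theorem iteratedFDeriv_apply_eq_dirDeriv {n : ℕ} (hf : ContDiff ℝ n f) (q : E) (v : Fin n → E) :
    iteratedFDeriv ℝ n f q v = dirDeriv (List.ofFn v) f q := by
  induction n generalizing q with
  | zero => simp [dirDeriv]
  | succ n ih =>
    have hdiff : DifferentiableAt ℝ (iteratedFDeriv ℝ n f) q :=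
      hf.differentiable_iteratedFDeriv (mod_cast n.lt_succ_self) q
    rw [hdiff.iteratedFDeriv_succ_apply_left', List.ofFn_succ, dirDeriv_cons]
    simp only [ih (hf.of_le (by simp)), Fin.tail_def]

theorem dirDeriv_eq_iteratedFDeriv {l : List E} (hf : ContDiff ℝ l.length f) (q : E) :
    dirDeriv l f q = iteratedFDeriv ℝ l.length f q l.get := by
  rw [iteratedFDeriv_apply_eq_dirDeriv hf, List.ofFn_get]

theorem iteratedDeriv_comp_add_smul {n : ℕ} (hf : ContDiff ℝ n f) (x v : E) :
    iteratedDeriv n (fun t : ℝ ↦ f (x + t • v)) =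
      fun t ↦ dirDeriv (List.replicate n v) f (x + t • v) := by
  induction n with
  | zero => rfl
  | succ n ih =>
    funext t
    have hdiff : Differentiable ℝ (dirDeriv (List.replicate n v) f) :=
      (contDiff_dirDeriv (n := 1) (by simpa [add_comm] using hf)).differentiable one_ne_zero
    rw [iteratedDeriv_succ, ih (hf.of_le (by simp)), (hdiff _).deriv_comp_add_smul,
      List.replicate_succ, dirDeriv_cons]

end DirectionalDerivatives

section PartialDerivatives

theorem opNorm_le_sum_norm_apply_basis {𝕜 ι κ E F : Type*}
    [NontriviallyNormedField 𝕜] [Fintype ι] [DecidableEq ι] [Fintype κ]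
    [NormedAddCommGroup E] [NormedSpace 𝕜 E] [NormedAddCommGroup F] [NormedSpace 𝕜 F]
    (b : Basis κ 𝕜 E) (hb : ∀ x k, ‖b.repr x k‖ ≤ ‖x‖)
    (A : ContinuousMultilinearMap 𝕜 (fun _ : ι ↦ E) F) :
    ‖A‖ ≤ ∑ r : ι → κ, ‖A (b ∘ r)‖ := by
  refine A.opNorm_le_bound (by positivity) fun v ↦ ?_
  have expand : A v = ∑ r : ι → κ, (∏ i, b.repr (v i) (r i)) • A (b ∘ r) := by
    conv_lhs => rw [← funext fun i ↦ b.sum_repr (v i), A.map_sum]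
    exact Finset.sum_congr rfl fun r _ ↦ A.map_smul_univ _ _
  rw [expand, Finset.sum_mul]
  refine norm_sum_le_of_le _ fun r _ ↦ ?_
  rw [norm_smul, norm_prod, mul_comm]
  gcongr
  exact hb _ _

variable {m : ℕ} {g : ℝ → ℝ → ℝ}

theorem pd_eq_dirDeriv {a b : ℕ} (hg : ContDiff ℝ (a + b : ℕ) fun q : ℝ × ℝ ↦ g q.1 q.2)
    (u v : ℝ) :
    pd a b g u v = dirDeriv (List.replicate a (1, 0) ++ List.replicate b (0, 1))
      (fun q : ℝ × ℝ ↦ g q.1 q.2) (u, v) := by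
  have inner (t : ℝ) : iteratedDeriv b (g t) v =
      dirDeriv (List.replicate b (0, 1)) (fun q : ℝ × ℝ ↦ g q.1 q.2) ((0, v) + t • (1, 0)) := by
    simpa using congrFun (iteratedDeriv_comp_add_smul (hg.of_le (by simp)) (t, (0 : ℝ)) (0, 1)) v
  have hb : ContDiff ℝ a (dirDeriv (List.replicate b (0, 1)) fun q : ℝ × ℝ ↦ g q.1 q.2) :=
    contDiff_dirDeriv (by simpa using hg)
  simp only [pd, inner, iteratedDeriv_comp_add_smul hb, dirDeriv_append]
  simp

theorem perm_replicate_count_zero (l : List (Fin 2)) :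
    l.Perm (List.replicate (l.count 0) 0 ++ List.replicate (l.length - l.count 0) 1) := by
  have count_add_count : l.count 0 + l.count 1 = l.length := by
    induction l with
    | nil => rfl
    | cons i l ih => fin_cases i <;> grind
  refine (List.perm_replicate_append_replicate (by decide)).2 ⟨rfl, by lia, fun i _ ↦ ?_⟩
  fin_cases i <;> simp

theorem iteratedFDeriv_apply_finTwoProd (hg : ContDiff ℝ m fun q : ℝ × ℝ ↦ g q.1 q.2)
    (q : ℝ × ℝ) (r : Fin m → Fin 2) :
    iteratedFDeriv ℝ m (fun q : ℝ × ℝ ↦ g q.1 q.2) q (Basis.finTwoProd ℝ ∘ r) =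
      pd ((List.ofFn r).count 0) (m - (List.ofFn r).count 0) g q.1 q.2 := by
  have count_le : (List.ofFn r).count 0 ≤ m := by
    simpa using (List.ofFn r).count_le_length (a := 0)
  have perm : (List.ofFn (Basis.finTwoProd ℝ ∘ r)).Perm
      (List.replicate ((List.ofFn r).count 0) (1, 0) ++
        List.replicate (m - (List.ofFn r).count 0) (0, 1)) := by
    simpa [List.map_ofFn] using (perm_replicate_count_zero (List.ofFn r)).map (Basis.finTwoProd ℝ)
  rw [iteratedFDeriv_apply_eq_dirDeriv hg, dirDeriv_eq_of_perm perm (by simpa using hg),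
    pd_eq_dirDeriv (by rwa [Nat.add_sub_cancel' count_le])]

theorem norm_iteratedFDeriv_sq_le (hg : ContDiff ℝ m fun q : ℝ × ℝ ↦ g q.1 q.2) (q : ℝ × ℝ) :
    ‖iteratedFDeriv ℝ m (fun q : ℝ × ℝ ↦ g q.1 q.2) q‖ ^ 2 ≤
      4 ^ m * ∑ a ∈ Finset.range (m + 1), pd a (m - a) g q.1 q.2 ^ 2 := by
  have coord_le : ∀ (x : ℝ × ℝ) (k : Fin 2), ‖(Basis.finTwoProd ℝ).repr x k‖ ≤ ‖x‖ := by
    intro x k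
    fin_cases k
    · simpa using norm_fst_le x
    · simpa using norm_snd_le x
  set A := iteratedFDeriv ℝ m (fun q : ℝ × ℝ ↦ g q.1 q.2) q
  calc ‖A‖ ^ 2
      ≤ (∑ r : Fin m → Fin 2, ‖A (Basis.finTwoProd ℝ ∘ r)‖) ^ 2 := by
        gcongr
        exact opNorm_le_sum_norm_apply_basis _ coord_le A
    _ ≤ 2 ^ m * ∑ r : Fin m → Fin 2, ‖A (Basis.finTwoProd ℝ ∘ r)‖ ^ 2 := by
        simpa using sq_sum_le_card_mul_sum_sq (s := Finset.univ)
          (f := fun r : Fin m → Fin 2 ↦ ‖A (Basis.finTwoProd ℝ ∘ r)‖)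
    _ ≤ 2 ^ m * ∑ _r : Fin m → Fin 2,
          ∑ a ∈ Finset.range (m + 1), pd a (m - a) g q.1 q.2 ^ 2 := by
        gcongr with r
        rw [iteratedFDeriv_apply_finTwoProd hg, Real.norm_eq_abs, sq_abs]
        refine Finset.single_le_sum (f := fun a ↦ pd a (m - a) g q.1 q.2 ^ 2)
          (fun _ _ ↦ sq_nonneg _) (Finset.mem_range_succ_iff.2 ?_)
        simpa using (List.ofFn r).count_le_length (a := 0)
    _ = _ := by
        rw [Finset.sum_const, Finset.card_univ, Fintype.card_fun, Fintype.card_fin,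
          Fintype.card_fin, nsmul_eq_mul, ← mul_assoc, Nat.cast_pow, ← mul_pow]
        norm_num

theorem continuous_pd {a b : ℕ} (hg : ContDiff ℝ (a + b : ℕ) fun q : ℝ × ℝ ↦ g q.1 q.2) :
    Continuous fun q : ℝ × ℝ ↦ pd a b g q.1 q.2 := by
  simp only [pd_eq_dirDeriv hg]
  exact (contDiff_dirDeriv (n := 0) (by simpa using hg)).continuous

theorem setIntegral_norm_iteratedFDeriv_sq_le
    (hg : ContDiff ℝ m fun q : ℝ × ℝ ↦ g q.1 q.2) :
    ∫ q in Icc (0 : ℝ) 1 ×ˢ Icc (0 : ℝ) 1,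
        ‖iteratedFDeriv ℝ m (fun q : ℝ × ℝ ↦ g q.1 q.2) q‖ ^ 2 ≤ 4 ^ m * Omega2M m g := by
  have integrable {ρ : ℝ × ℝ → ℝ} (hρ : Continuous ρ) :
      IntegrableOn ρ (Icc (0 : ℝ) 1 ×ˢ Icc (0 : ℝ) 1) :=
    hρ.continuousOn.integrableOn_compact (isCompact_Icc.prod isCompact_Icc)
  have hpd : ∀ a ∈ Finset.range (m + 1),
      Continuous fun q : ℝ × ℝ ↦ pd a (m - a) g q.1 q.2 ^ 2 := fun a ha ↦
    (continuous_pd (by rwa [Nat.add_sub_cancel' (Finset.mem_range_succ_iff.1 ha)])).pow 2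
  rw [Omega2M, ← integral_finsetSum _ fun a ha ↦ integrable (hpd a ha), ← integral_const_mul]
  exact integral_mono (integrable ((hg.continuous_iteratedFDeriv le_rfl).norm.pow 2))
    (integrable ((continuous_finsetSum _ hpd).const_mul _)) (norm_iteratedFDeriv_sq_le hg)

end PartialDerivatives

section Polynomials

/-- The polynomial functions on the plane of total degree less than `n`. -/
def bivariatePolynomial (n : ℕ) : Submodule ℝ (ℝ × ℝ → ℝ) :=
  Submodule.span ℝ {p | ∃ i j : ℕ, i + j < n ∧ p = fun x ↦ x.1 ^ i * x.2 ^ j}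

theorem prod_coord_mem_bivariatePolynomial {k n : ℕ} (hk : k < n) (r : Fin k → Fin 3) :
    (fun x : ℝ × ℝ ↦ ∏ i, ![x.1, x.2, 1] (r i)) ∈ bivariatePolynomial n := by
  refine Submodule.subset_span ⟨#{i | r i = 0}, #{i | r i = 1}, ?_, ?_⟩
  · have disjoint : Disjoint (α := Finset (Fin k)) {i | r i = 0} {i | r i = 1} :=
      Finset.disjoint_filter.2 fun i _ h ↦ by simp [h]
    rw [← Finset.card_union_of_disjoint disjoint]
    exact (card_finset_fin_le _).trans_lt hk
  · funext x
    rw [← Finset.prod_fiberwise' Finset.univ r ![x.1, x.2, 1]]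
    simp [Fin.prod_univ_three]

theorem multilinear_apply_sub_eq_sum {k : ℕ}
    (A : ContinuousMultilinearMap ℝ (fun _ : Fin k ↦ ℝ × ℝ) ℝ) (x y : ℝ × ℝ) :
    A (fun _ ↦ x - y) = ∑ r : Fin k → Fin 3,
      (∏ i, ![x.1, x.2, 1] (r i)) * A fun i ↦ ![(1, 0), (0, 1), -y] (r i) := by
  have expand : x - y = ∑ j : Fin 3, ![x.1, x.2, 1] j • ![(1, 0), (0, 1), -y] j := by
    simp [Fin.sum_univ_three, sub_eq_add_neg]
  simp_rw [expand, A.map_sum, A.map_smul_univ, smul_eq_mul]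

theorem averagedTaylor_mem_bivariatePolynomial {μ : Measure (ℝ × ℝ)} [IsFiniteMeasureOnCompacts μ]
    {K : Set (ℝ × ℝ)} (hK : IsCompact K) {n : ℕ} {f : ℝ × ℝ → ℝ} (hf : ContDiff ℝ n f) :
    averagedTaylor μ K n f ∈ bivariatePolynomial n := by
  have integrable {k : ℕ} (hk : k ∈ Finset.range n) (r : Fin k → Fin 3) :
      IntegrableOn (fun y ↦ iteratedFDeriv ℝ k f y fun i ↦ ![(1, 0), (0, 1), -y] (r i)) K μ := by
    refine ContinuousOn.integrableOn_compact hK (Continuous.continuousOn ?_)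
    refine continuous_iteratedFDeriv_apply hf (Finset.mem_range.1 hk).le continuous_id
      (continuous_pi fun i ↦ ?_)
    generalize r i = j
    fin_cases j
    exacts [continuous_const, continuous_const, continuous_neg]
  have expand : averagedTaylor μ K n f = ∑ k ∈ Finset.range n, ∑ r : Fin k → Fin 3,
      ((μ.real K)⁻¹ * ((k ! : ℝ)⁻¹ *
        ∫ y in K, iteratedFDeriv ℝ k f y (fun i ↦ ![(1, 0), (0, 1), -y] (r i)) ∂μ)) •
        fun x : ℝ × ℝ ↦ ∏ i, ![x.1, x.2, 1] (r i) := by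
    funext x
    simp only [averagedTaylor, taylorPolynomial, setAverage_eq, multilinear_apply_sub_eq_sum,
      Finset.sum_apply, Pi.smul_apply, smul_eq_mul, Finset.mul_sum]
    rw [integral_finsetSum _ fun k hk ↦ integrable_finsetSum _ fun r _ ↦
      ((integrable hk r).const_mul _).const_mul _, Finset.mul_sum]
    refine Finset.sum_congr rfl fun k hk ↦ ?_
    rw [integral_finsetSum _ fun r _ ↦ ((integrable hk r).const_mul _).const_mul _,
      Finset.mul_sum]
    refine Finset.sum_congr rfl fun r _ ↦ ?_
    rw [integral_const_mul, integral_const_mul]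
    ring
  rw [expand]
  exact Submodule.sum_mem _ fun k hk ↦ Submodule.sum_mem _ fun r _ ↦ Submodule.smul_mem _ _
    (prod_coord_mem_bivariatePolynomial (Finset.mem_range.1 hk) r)

variable {n : ℕ} {p : ℝ × ℝ → ℝ}

theorem exists_coeff_of_mem_bivariatePolynomial (hp : p ∈ bivariatePolynomial n) :
    ∃ c : Fin n → Fin n → ℝ, ∀ u v, p (u, v) = ∑ a, ∑ b, c a b * u ^ (a : ℕ) * v ^ (b : ℕ) := by
  induction hp using Submodule.span_induction with
  | mem p hp =>
    obtain ⟨i, j, hij, rfl⟩ := hp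
    refine ⟨Pi.single ⟨i, by lia⟩ (Pi.single ⟨j, by lia⟩ 1), fun u v ↦ ?_⟩
    rw [Finset.sum_eq_single ⟨i, by lia⟩ _ (by simp), Finset.sum_eq_single ⟨j, by lia⟩ _ (by simp)]
    · simp
    · intro b _ hb
      simp [hb]
    · intro a _ ha
      simp [ha]
  | zero => exact ⟨0, by simp⟩
  | add p q _ _ hp hq =>
    obtain ⟨c, hc⟩ := hp
    obtain ⟨d, hd⟩ := hq
    exact ⟨c + d, fun u v ↦ by simp [hc, hd, add_mul, Finset.sum_add_distrib]⟩
  | smul s p _ hp =>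
    obtain ⟨c, hc⟩ := hp
    exact ⟨s • c, fun u v ↦ by simp [hc, Finset.mul_sum, mul_assoc]⟩

theorem pd_mul (a b : ℕ) (f h : ℝ → ℝ) (u v : ℝ) :
    pd a b (fun u v ↦ f u * h v) u v = iteratedDeriv a f u * iteratedDeriv b h v := by
  simp only [pd, iteratedDeriv_const_mul_field, iteratedDeriv_mul_const_field]

theorem iteratedDeriv_pow_eq_zero {𝕜 : Type*} [NontriviallyNormedField 𝕜] {i k : ℕ} (h : i < k)
    (x : 𝕜) : iteratedDeriv k (fun x : 𝕜 ↦ x ^ i) x = 0 := by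
  rw [iteratedDeriv_eq_iterate, iter_deriv_pow,
    Finset.prod_eq_zero (Finset.mem_range.2 h) (sub_self _), zero_mul]

theorem contDiff_of_mem_bivariatePolynomial {k : WithTop ℕ∞} (hp : p ∈ bivariatePolynomial n) :
    ContDiff ℝ k p := by
  induction hp using Submodule.span_induction with
  | mem p hp =>
    obtain ⟨i, j, _, rfl⟩ := hp
    fun_prop
  | zero => exact contDiff_const
  | add p q _ _ hp hq => exact hp.add hq
  | smul s p _ hp => exact hp.const_smul s

theorem iteratedFDeriv_monomial_eq_zero {i j : ℕ} (hij : i + j < n) :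
    iteratedFDeriv ℝ n (fun x : ℝ × ℝ ↦ x.1 ^ i * x.2 ^ j) = 0 := by
  have pd_eq_zero (q : ℝ × ℝ) (a : ℕ) :
      pd a (n - a) (fun u v ↦ u ^ i * v ^ j) q.1 q.2 = 0 := by
    rw [pd_mul]
    obtain h | h : i < a ∨ j < n - a := by lia
    · rw [iteratedDeriv_pow_eq_zero h, zero_mul]
    · rw [iteratedDeriv_pow_eq_zero h, mul_zero]
  funext q
  have := norm_iteratedFDeriv_sq_le (m := n) (g := fun u v ↦ u ^ i * v ^ j) (by fun_prop) q
  simpa [pd_eq_zero] using this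

theorem iteratedFDeriv_eq_zero_of_mem_bivariatePolynomial (hp : p ∈ bivariatePolynomial n) :
    iteratedFDeriv ℝ n p = 0 := by
  induction hp using Submodule.span_induction with
  | mem p hp =>
    obtain ⟨i, j, hij, rfl⟩ := hp
    exact iteratedFDeriv_monomial_eq_zero hij
  | zero => exact iteratedFDeriv_fun_zero
  | add p q hp hq hDp hDq =>
    rw [iteratedFDeriv_add (contDiff_of_mem_bivariatePolynomial hp)
      (contDiff_of_mem_bivariatePolynomial hq), hDp, hDq, add_zero]
  | smul s p hp hDp =>
    funext q
    rw [iteratedFDeriv_const_smul_apply (contDiff_of_mem_bivariatePolynomial hp).contDiffAt, hDp]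
    simp

theorem pd_congr_of_iteratedFDeriv_eq {f g : ℝ → ℝ → ℝ} {a b : ℕ}
    (hf : ContDiff ℝ (a + b : ℕ) fun q : ℝ × ℝ ↦ f q.1 q.2)
    (hg : ContDiff ℝ (a + b : ℕ) fun q : ℝ × ℝ ↦ g q.1 q.2)
    (h : iteratedFDeriv ℝ (a + b) (fun q : ℝ × ℝ ↦ f q.1 q.2) =
      iteratedFDeriv ℝ (a + b) fun q : ℝ × ℝ ↦ g q.1 q.2) (u v : ℝ) :
    pd a b f u v = pd a b g u v := by
  rw [pd_eq_dirDeriv hf, pd_eq_dirDeriv hg]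
  have length_eq : a + b = (List.replicate a ((1, 0) : ℝ × ℝ) ++
    List.replicate b (0, 1)).length := by simp
  rw [length_eq] at hf hg h
  rw [dirDeriv_eq_iteratedFDeriv hf, dirDeriv_eq_iteratedFDeriv hg, h]

theorem OmegaTilde2M_sub_of_mem_bivariatePolynomial {g : ℝ → ℝ → ℝ}
    (hg : ContDiff ℝ n fun q : ℝ × ℝ ↦ g q.1 q.2) (hp : p ∈ bivariatePolynomial n) :
    OmegaTilde2M n (fun u v ↦ g u v - p (u, v)) = OmegaTilde2M n g := by
  have hp' : ContDiff ℝ n p := contDiff_of_mem_bivariatePolynomial hp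
  have hD : iteratedFDeriv ℝ n (fun q : ℝ × ℝ ↦ g q.1 q.2 - p q) =
      iteratedFDeriv ℝ n fun q : ℝ × ℝ ↦ g q.1 q.2 := by
    refine (iteratedFDeriv_sub hg hp').trans ?_
    rw [iteratedFDeriv_eq_zero_of_mem_bivariatePolynomial hp, sub_zero]
  have hpd {a : ℕ} (ha : a ∈ Finset.range (n + 1)) (q : ℝ × ℝ) :
      pd a (n - a) (fun u v ↦ g u v - p (u, v)) q.1 q.2 = pd a (n - a) g q.1 q.2 := by
    obtain ⟨b, rfl⟩ := Nat.exists_eq_add_of_le (Finset.mem_range_succ_iff.1 ha)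
    rw [Nat.add_sub_cancel_left]
    exact pd_congr_of_iteratedFDeriv_eq (hg.sub hp') hg hD q.1 q.2
  rw [OmegaTilde2M, OmegaTilde2M, Omega2M, Omega2M]
  congr 1
  exact Finset.sum_congr rfl fun a ha ↦ by simp only [hpd ha]

end Polynomials

section UnitSquare

/-- The closed unit square, the domain of the integrals in `Omega2M`. -/
abbrev unitSquare : Set (ℝ × ℝ) := Icc 0 1 ×ˢ Icc 0 1

theorem volume_unitSquare : volume unitSquare = 1 := by
  rw [Measure.volume_eq_prod, Measure.prod_prod, Real.volume_Icc, sub_zero, ENNReal.ofReal_one,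
    one_mul]

theorem diam_unitSquare_le : Metric.diam unitSquare ≤ 1 :=
  Metric.diam_le_of_forall_dist_le zero_le_one fun _ hx _ hy ↦
    max_le (Real.dist_le_of_mem_Icc_01 hx.1 hy.1) (Real.dist_le_of_mem_Icc_01 hx.2 hy.2)

theorem isCompact_unitSquare : IsCompact unitSquare :=
  isCompact_Icc.prod isCompact_Icc

theorem rpow_setAverage_norm_iteratedFDeriv_le {m : ℕ} {g : ℝ → ℝ → ℝ}
    (hg : ContDiff ℝ m fun q : ℝ × ℝ ↦ g q.1 q.2) :
    (⨍ q in unitSquare, ‖iteratedFDeriv ℝ m (fun q : ℝ × ℝ ↦ g q.1 q.2) q‖ ^ (2 : ℝ)) ^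
      (2 : ℝ)⁻¹ ≤ 2 ^ m * OmegaTilde2M m g := by
  have sqrt_four_pow : √(4 ^ m) = 2 ^ m := by
    rw [Real.sqrt_eq_iff_mul_self_eq (by positivity) (by positivity), ← mul_pow]
    norm_num
  simp only [setAverage_eq, measureReal_def, volume_unitSquare, ENNReal.toReal_one, inv_one,
    one_smul, Real.rpow_two]
  rw [inv_eq_one_div, ← Real.sqrt_eq_rpow, OmegaTilde2M, ← sqrt_four_pow,
    ← Real.sqrt_mul (by positivity)]
  exact Real.sqrt_le_sqrt (setIntegral_norm_iteratedFDeriv_sq_le hg)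

theorem abs_sub_averagedTaylor_unitSquare_le {n : ℕ} (hn : n ≠ 0) {g : ℝ → ℝ → ℝ}
    (hg : ContDiff ℝ (n + 1) fun q : ℝ × ℝ ↦ g q.1 q.2) {x : ℝ × ℝ} (hx : x ∈ unitSquare) :
    |g x.1 x.2 - averagedTaylor volume unitSquare (n + 1) (fun q : ℝ × ℝ ↦ g q.1 q.2) x| ≤
      2 ^ (n + 1) / (n ! * n) * OmegaTilde2M (n + 1) g := by
  have dimension_div : (finrank ℝ (ℝ × ℝ) : ℝ) / 2 = 1 := by simp
  have bound := norm_sub_averagedTaylor_le (μ := volume) hg isCompact_unitSquare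
    ((convex_Icc 0 1).prod (convex_Icc 0 1)) (volume_unitSquare ▸ one_ne_zero) hx one_le_two
    (by rw [dimension_div, lt_add_iff_pos_left]; positivity)
  rw [dimension_div, add_sub_cancel_right] at bound
  calc _ ≤ _ := bound
    _ ≤ 1 / (n ! * n) * (2 ^ (n + 1) * OmegaTilde2M (n + 1) g) := by
        gcongr
        · exact Real.rpow_nonneg (integral_nonneg fun _ ↦ by positivity) _
        · exact pow_le_one₀ Metric.diam_nonneg diam_unitSquare_le
        · exact rpow_setAverage_norm_iteratedFDeriv_le hg
    _ = _ := by ring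

end UnitSquare

end Census

open Census in
/-- polynomial approximation in sup-norm controlled by the `m`-th
order smoothness seminorm.  For every `m ≥ 2` there is `C` depending only on `m` such
that every `m`-times continuously differentiable `g : [0,1]² → ℝ` admits a polynomial
`p(u,v)` of degree at most `m-1` in each variable with
`sup_{[0,1]²} |g - p| ≤ C Ω̃(g)`, and the remainder `g̃ = g - p` satisfies
`Ω̃(g̃) = Ω̃(g)`. -/
theorem statement10 (m : ℕ) (hm : 2 ≤ m) :
    ∃ C : ℝ, 0 < C ∧
      ∀ g : ℝ → ℝ → ℝ, ContDiff ℝ (m : ℕ∞) (fun q : ℝ × ℝ => g q.1 q.2) →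
        ∃ c : Fin m → Fin m → ℝ,
          (∀ u ∈ Set.Icc (0:ℝ) 1, ∀ v ∈ Set.Icc (0:ℝ) 1,
            |g u v - ∑ a, ∑ b, c a b * u ^ (a : ℕ) * v ^ (b : ℕ)| ≤
              C * OmegaTilde2M m g) ∧
          OmegaTilde2M m
              (fun u v => g u v - ∑ a, ∑ b, c a b * u ^ (a : ℕ) * v ^ (b : ℕ)) =
            OmegaTilde2M m g := by
  obtain ⟨n, rfl⟩ : ∃ n, m = n + 1 := ⟨m - 1, by lia⟩
  have hn : n ≠ 0 := by lia
  refine ⟨2 ^ (n + 1) / (n.factorial * n), by positivity, fun g hg ↦ ?_⟩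
  have p_mem := averagedTaylor_mem_bivariatePolynomial (μ := MeasureTheory.volume)
    isCompact_unitSquare hg
  obtain ⟨c, hc⟩ := exists_coeff_of_mem_bivariatePolynomial p_mem
  refine ⟨c, ?_⟩
  simp only [← hc]
  exact ⟨fun u hu v hv ↦ abs_sub_averagedTaylor_unitSquare_le hn hg (x := (u, v)) ⟨hu, hv⟩,
    OmegaTilde2M_sub_of_mem_bivariatePolynomial hg p_mem⟩
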